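/- arXiv:2107.08086 — 3 statements merged into one kernel-verified Lean document; each statement's English description precedes it below -/
import Mathlib

section
/- (Proposition 1, exact ARMA fit of a linear system.) Suppose O_q has full column rank, i.e., rank O_q = n (equivalently O_qᵀ O_q is invertible), and set O_q⁺ := (O_qᵀ O_q)^{−1} O_qᵀ. Define the p×p matrices α_1, …, α_q by the block row [α_1 | α_2 | … | α_q] = C A^q O_q⁺ ∈ ℝ^{p×qp}, and the p×m matrices β_1, …, β_q by the block row [β_1 | β_2 | … | β_q] = [C B | C A B | … | C A^{q−1} B] − C A^q O_q⁺ H_q ∈ ℝ^{p×qm}. Then for every pair of sequences x : ℕ → ℝ^n, u : ℕ → ℝ^m with x_{k+1} = A x_k + B u_k for all k, the outputs z_k = C x_k satisfy the order-q ARMA relation z_t = Σ_{i=1}^{q} α_i z_{t−i} + Σ_{i=1}^{q} β_i u_{t−i} for all t ≥ q. -/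
open Matrix Finset

/-- The observability-type matrix `O_q = [C A^{q−1}; C A^{q−2}; …; C A; C]`. -/
def Oq {n p : ℕ} (A : Matrix (Fin n) (Fin n) ℝ) (C : Matrix (Fin p) (Fin n) ℝ)
    (q : ℕ) : Matrix (Fin q × Fin p) (Fin n) ℝ :=
  Matrix.of fun ir c => (C * A ^ (q - 1 - (ir.1 : ℕ))) ir.2 c

/-- The block Toeplitz matrix `H_q` whose (0-indexed) `(i,j)` block is
`C A^{j−i−1} B` if `j > i` and `0` otherwise. -/
def Hq {n m p : ℕ} (A : Matrix (Fin n) (Fin n) ℝ) (B : Matrix (Fin n) (Fin m) ℝ)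
    (C : Matrix (Fin p) (Fin n) ℝ) (q : ℕ) :
    Matrix (Fin q × Fin p) (Fin q × Fin m) ℝ :=
  Matrix.of fun ir jc =>
    if (ir.1 : ℕ) < (jc.1 : ℕ) then
      (C * A ^ ((jc.1 : ℕ) - (ir.1 : ℕ) - 1) * B) ir.2 jc.2
    else 0

/-- The left pseudoinverse `O_q⁺ = (O_qᵀ O_q)⁻¹ O_qᵀ`. -/
noncomputable def OqPinv {n p : ℕ} (A : Matrix (Fin n) (Fin n) ℝ) (C : Matrix (Fin p) (Fin n) ℝ)
    (q : ℕ) : Matrix (Fin n) (Fin q × Fin p) ℝ :=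
  ((Oq A C q)ᵀ * Oq A C q)⁻¹ * (Oq A C q)ᵀ

/-- The block row `[C B | C A B | … | C A^{q−1} B]` (block `j`, 0-indexed, is `C A^j B`). -/
def Mrow {n m p : ℕ} (A : Matrix (Fin n) (Fin n) ℝ) (B : Matrix (Fin n) (Fin m) ℝ)
    (C : Matrix (Fin p) (Fin n) ℝ) (q : ℕ) :
    Matrix (Fin p) (Fin q × Fin m) ℝ :=
  Matrix.of fun r jc => (C * A ^ (jc.1 : ℕ) * B) r jc.2

theorem aux_traj {n m : ℕ} (A : Matrix (Fin n) (Fin n) ℝ) (B : Matrix (Fin n) (Fin m) ℝ)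
    (x : ℕ → Fin n → ℝ) (u : ℕ → Fin m → ℝ)
    (hx : ∀ k, x (k + 1) = A.mulVec (x k) + B.mulVec (u k)) (s k : ℕ) :
    x (s + k) = (A ^ k).mulVec (x s)
      + ∑ l ∈ Finset.range k, (A ^ l * B).mulVec (u (s + k - 1 - l)) := by
  induction k with
  | zero => simp
  | succ k ih =>
    rw [← add_assoc, hx, ih, Finset.sum_range_succ', Matrix.mulVec_add, Matrix.mulVec_mulVec,
      ← pow_succ', Matrix.mulVec_sum, add_assoc]
    congr 2
    · apply Finset.sum_congr rfl
      intro l _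
      rw [Matrix.mulVec_mulVec, ← Matrix.mul_assoc, ← pow_succ']
      congr 2
      omega
    · simp

theorem aux_out {n m p : ℕ} (A : Matrix (Fin n) (Fin n) ℝ) (B : Matrix (Fin n) (Fin m) ℝ)
    (C : Matrix (Fin p) (Fin n) ℝ)
    (x : ℕ → Fin n → ℝ) (u : ℕ → Fin m → ℝ)
    (hx : ∀ k, x (k + 1) = A.mulVec (x k) + B.mulVec (u k)) (q t i : ℕ) (hi : i ≤ q)
    (hq : q ≤ t) :
    C.mulVec (x (t - i)) = (C * A ^ (q - i)).mulVec (x (t - q))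
      + ∑ j : Fin q, if i ≤ (j : ℕ) then
          (C * A ^ ((j : ℕ) - i) * B).mulVec (u (t - 1 - (j : ℕ))) else 0 := by
  have e : t - i = (t - q) + (q - i) := by omega
  rw [e, aux_traj A B x u hx, Matrix.mulVec_add, Matrix.mulVec_mulVec, Matrix.mulVec_sum]
  congr 1
  rw [Fin.sum_univ_eq_sum_range (fun j => if i ≤ j then
          (C * A ^ (j - i) * B).mulVec (u (t - 1 - j)) else 0) q]
  obtain ⟨k, rfl⟩ := Nat.exists_eq_add_of_le hi
  rw [Finset.sum_range_add, Finset.sum_eq_zero (s := Finset.range i), zero_add]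
  · have : i + k - i = k := by omega
    rw [this]
    apply Finset.sum_congr rfl
    intro l hl
    rw [Finset.mem_range] at hl
    rw [if_pos (by omega), Matrix.mulVec_mulVec, ← Matrix.mul_assoc]
    congr 2
    · congr 3; omega
    · omega
  · intro j hj
    rw [Finset.mem_range] at hj
    rw [if_neg (by omega)]

theorem aux_pinv {n p : ℕ} (A : Matrix (Fin n) (Fin n) ℝ) (C : Matrix (Fin p) (Fin n) ℝ)
    (q : ℕ) (hrank : (Oq A C q).rank = n) : OqPinv A C q * Oq A C q = 1 := by
  unfold OqPinv
  rw [Matrix.mul_assoc]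
  apply Matrix.nonsing_inv_mul
  rw [← Matrix.isUnit_iff_isUnit_det, ← Matrix.mulVec_surjective_iff_isUnit]
  have h : ((Oq A C q)ᵀ * Oq A C q).rank = n := by
    rw [Matrix.rank_transpose_mul_self, hrank]
  have h2 : LinearMap.range ((Oq A C q)ᵀ * Oq A C q).mulVecLin = ⊤ := by
    apply Submodule.eq_top_of_finrank_eq
    rw [← Matrix.rank, h]; simp
  exact LinearMap.range_eq_top.mp h2

/-- **Proposition 1.** If `O_q` has full column rank `n`, then with the
block rows `[α_1|…|α_q] := C A^q O_q⁺` and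
`[β_1|…|β_q] := [C B | C A B | … | C A^{q−1} B] − C A^q O_q⁺ H_q`, every trajectory of
the linear system satisfies the order-`q` ARMA relation
`z_t = Σ_{i=1}^q α_i z_{t−i} + Σ_{i=1}^q β_i u_{t−i}` for all `t ≥ q`,
where the block rows act on the stacked vectors `(z_{t−1};…;z_{t−q})` and
`(u_{t−1};…;u_{t−q})`. -/
theorem arma_exact_fit {n m p : ℕ}
    (A : Matrix (Fin n) (Fin n) ℝ) (B : Matrix (Fin n) (Fin m) ℝ)
    (C : Matrix (Fin p) (Fin n) ℝ)
    (q : ℕ) (hq : 1 ≤ q) (hrank : (Oq A C q).rank = n) :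
    ∀ (x : ℕ → Fin n → ℝ) (u : ℕ → Fin m → ℝ) (z : ℕ → Fin p → ℝ),
      (∀ k, x (k + 1) = A.mulVec (x k) + B.mulVec (u k)) →
      (∀ k, z k = C.mulVec (x k)) →
      ∀ t, q ≤ t →
        z t = (C * A ^ q * OqPinv A C q).mulVec
                (fun ir : Fin q × Fin p => z (t - 1 - (ir.1 : ℕ)) ir.2)
            + (Mrow A B C q - C * A ^ q * OqPinv A C q * Hq A B C q).mulVec
                (fun jc : Fin q × Fin m => u (t - 1 - (jc.1 : ℕ)) jc.2) := by
  intro x u z hx hz t ht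
  have hM : z t = (C * A ^ q).mulVec (x (t - q)) + (Mrow A B C q).mulVec
      (fun jc : Fin q × Fin m => u (t - 1 - (jc.1 : ℕ)) jc.2) := by
    have := aux_out A B C x u hx q t 0 (Nat.zero_le _) ht
    rw [hz]
    simp only [Nat.sub_zero, Nat.zero_le, if_true] at this
    rw [this]
    congr 1
    ext r
    simp [Finset.sum_apply, Matrix.mulVec, dotProduct, Mrow, Fintype.sum_prod_type]
  have hZ : (fun ir : Fin q × Fin p => z (t - 1 - (ir.1 : ℕ)) ir.2)
      = (Oq A C q).mulVec (x (t - q)) + (Hq A B C q).mulVec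
      (fun jc : Fin q × Fin m => u (t - 1 - (jc.1 : ℕ)) jc.2) := by
    ext ⟨i, r⟩
    have := congrFun (aux_out A B C x u hx q t (i + 1) i.2 ht) r
    have e1 : t - 1 - (i : ℕ) = t - (i + 1) := by omega
    have e2 : q - 1 - (i : ℕ) = q - (i + 1) := by omega
    simp only [hz]
    rw [e1, this]
    simp only [Pi.add_apply, Finset.sum_apply]
    congr 1
    · simp only [Matrix.mulVec, dotProduct, Oq, Matrix.of_apply, e2]
    · simp only [Matrix.mulVec, dotProduct, Hq, Matrix.of_apply, Fintype.sum_prod_type]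
      apply Finset.sum_congr rfl
      intro j _
      by_cases hij : (i : ℕ) < j
      · rw [if_pos (by omega)]
        simp only [if_pos hij, Nat.sub_sub]
        rfl
      · rw [if_neg (by omega)]
        simp only [if_neg hij, zero_mul, Finset.sum_const_zero, Pi.zero_apply]
  rw [hZ, hM, Matrix.mulVec_add, Matrix.mulVec_mulVec, Matrix.mulVec_mulVec, Matrix.sub_mulVec,
    Matrix.mul_assoc (C * A ^ q) (OqPinv A C q) (Oq A C q), aux_pinv A C q hrank, Matrix.mul_one]
  abel
end

section
/- (Corollary 1, exact ARMA fit of a linear time-varying system.) Fix t ≥ q and suppose the time-varying matrix O_q(t) := [C_t A_{t−1} A_{t−2} ⋯ A_{t−q}; C_{t−1} A_{t−2} ⋯ A_{t−q}; …; C_{t−q+1} A_{t−q}; C_{t−q}] ∈ ℝ^{((q+1)·p set to appropriate size)×n}, i.e., the matrix whose i-th block row (i = 0, …, q) is C_{t−i} A_{t−i−1} ⋯ A_{t−q} (with the last block row equal to C_{t−q}), restricted to its last q block rows O_q(t) = [C_{t−1}A_{t−2}⋯A_{t−q}; …; C_{t−q+1}A_{t−q}; C_{t−q}] ∈ ℝ^{qp×n},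 has full column rank n. Let H_q(t) ∈ ℝ^{qp×qm} be the block matrix whose (i,j) block for 1 ≤ i, j ≤ q is C_{t−i} A_{t−i−1} ⋯ A_{t−j+1} B_{t−j} if j > i (interpreted as C_{t−i} B_{t−j} when j = i+1) and zero otherwise, and set O_q(t)⁺ := (O_q(t)ᵀ O_q(t))^{−1} O_q(t)ᵀ. Define Φ := A_{t−1} A_{t−2} ⋯ A_{t−q}, the block rows [α_1 | … | α_q] := C_t Φ O_q(t)⁺ and [β_1 | … | β_q] := [C_t B_{t−1} | C_t A_{t−1} B_{t−2} | … | C_t A_{t−1}⋯A_{t−q+1} B_{t−q}] − C_t Φ O_q(t)⁺ H_q(t). Then every pair of sequences x, u with x_{k+1} = A_k x_k + B_k u_k and z_k = C_k x_k satisfies z_t = Σ_{i=1}^{q} α_i z_{t−i} + Σ_{i=1}^{q} β_i u_{t−i}. -/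
open Matrix Finset

/-- State-transition product `stm A a k = A_{a+k−1} ⋯ A_{a+1} A_a`
(so `stm A a k` maps the state at time `a` to the state at time `a + k`
for the homogeneous part of `x_{j+1} = A_j x_j + B_j u_j`). -/
def stm {n : ℕ} (A : ℕ → Matrix (Fin n) (Fin n) ℝ) (a : ℕ) :
    ℕ → Matrix (Fin n) (Fin n) ℝ
  | 0 => 1
  | k + 1 => A (a + k) * stm A a k

/-- Time-varying observability-type matrix
`O_q(t) = [C_{t−1} A_{t−2}⋯A_{t−q}; …; C_{t−q+1} A_{t−q}; C_{t−q}]`: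
block row `i` (0-indexed) is `C_{t−1−i} A_{t−2−i} ⋯ A_{t−q}`. -/
def OqTV {n p : ℕ} (A : ℕ → Matrix (Fin n) (Fin n) ℝ)
    (Cm : ℕ → Matrix (Fin p) (Fin n) ℝ) (q t : ℕ) :
    Matrix (Fin q × Fin p) (Fin n) ℝ :=
  Matrix.of fun ir c =>
    (Cm (t - 1 - (ir.1 : ℕ)) * stm A (t - q) (q - 1 - (ir.1 : ℕ))) ir.2 c

/-- Time-varying block matrix `H_q(t)` whose (0-indexed) `(i,j)` block is
`C_{t−1−i} A_{t−2−i} ⋯ A_{t−j} B_{t−1−j}` if `j > i` (read as `C_{t−1−i} B_{t−2−i}`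
when `j = i + 1`) and `0` otherwise. -/
def HqTV {n m p : ℕ} (A : ℕ → Matrix (Fin n) (Fin n) ℝ)
    (B : ℕ → Matrix (Fin n) (Fin m) ℝ) (Cm : ℕ → Matrix (Fin p) (Fin n) ℝ)
    (q t : ℕ) : Matrix (Fin q × Fin p) (Fin q × Fin m) ℝ :=
  Matrix.of fun ir jc =>
    if (ir.1 : ℕ) < (jc.1 : ℕ) then
      (Cm (t - 1 - (ir.1 : ℕ)) * stm A (t - (jc.1 : ℕ)) ((jc.1 : ℕ) - (ir.1 : ℕ) - 1)
        * B (t - 1 - (jc.1 : ℕ))) ir.2 jc.2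
    else 0

/-- Time-varying block row `[C_t B_{t−1} | C_t A_{t−1} B_{t−2} | … | C_t A_{t−1}⋯A_{t−q+1} B_{t−q}]`:
block `j` (0-indexed) is `C_t A_{t−1} ⋯ A_{t−j} B_{t−1−j}`. -/
def MrowTV {n m p : ℕ} (A : ℕ → Matrix (Fin n) (Fin n) ℝ)
    (B : ℕ → Matrix (Fin n) (Fin m) ℝ) (Cm : ℕ → Matrix (Fin p) (Fin n) ℝ)
    (q t : ℕ) : Matrix (Fin p) (Fin q × Fin m) ℝ :=
  Matrix.of fun r jc =>
    (Cm t * stm A (t - (jc.1 : ℕ)) (jc.1 : ℕ) * B (t - 1 - (jc.1 : ℕ))) r jc.2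

lemma stm_succ_right {n : ℕ} (A : ℕ → Matrix (Fin n) (Fin n) ℝ) (a k : ℕ) :
    stm A a (k + 1) = stm A (a + 1) k * A a := by
  induction k with
  | zero => simp [stm]
  | succ k ih =>
    rw [stm, ih, stm, Matrix.mul_assoc]
    congr 2
    omega

lemma stm_step {n m : ℕ}
    (A : ℕ → Matrix (Fin n) (Fin n) ℝ) (B : ℕ → Matrix (Fin n) (Fin m) ℝ)
    (x : ℕ → Fin n → ℝ) (u : ℕ → Fin m → ℝ)
    (hx : ∀ k, x (k + 1) = (A k).mulVec (x k) + (B k).mulVec (u k))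
    (a k : ℕ) : (stm A (a + 1) k).mulVec (x (a + 1)) =
      (stm A a (k + 1)).mulVec (x a) + (stm A (a + 1) k * B a).mulVec (u a) := by
  rw [hx, stm_succ_right, Matrix.mulVec_add, Matrix.mulVec_mulVec, Matrix.mulVec_mulVec]

lemma state_M {n m : ℕ}
    (A : ℕ → Matrix (Fin n) (Fin n) ℝ) (B : ℕ → Matrix (Fin n) (Fin m) ℝ)
    (x : ℕ → Fin n → ℝ) (u : ℕ → Fin m → ℝ)
    (hx : ∀ k, x (k + 1) = (A k).mulVec (x k) + (B k).mulVec (u k))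
    (t d : ℕ) (hd : d ≤ t) :
    x t = (stm A (t - d) d).mulVec (x (t - d)) +
      ∑ j ∈ Finset.range d, (stm A (t - j) j * B (t - 1 - j)).mulVec (u (t - 1 - j)) := by
  induction d with
  | zero => simp [stm]
  | succ d ih =>
    have h := stm_step A B x u hx (t - (d + 1)) d
    have e : t - (d + 1) + 1 = t - d := by omega
    have e2 : t - 1 - d = t - (d + 1) := by omega
    rw [e] at h
    rw [Finset.sum_range_succ, e2]
    refine (ih (by omega)).trans ?_
    rw [h]
    abel

lemma state_H {n m : ℕ}
    (A : ℕ → Matrix (Fin n) (Fin n) ℝ) (B : ℕ → Matrix (Fin n) (Fin m) ℝ)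
    (x : ℕ → Fin n → ℝ) (u : ℕ → Fin m → ℝ)
    (hx : ∀ k, x (k + 1) = (A k).mulVec (x k) + (B k).mulVec (u k))
    (t i d : ℕ) (hi : i + 1 ≤ d) (hd : d ≤ t) :
    x (t - 1 - i) = (stm A (t - d) (d - 1 - i)).mulVec (x (t - d)) +
      ∑ j ∈ Finset.range d, if i < j then
        (stm A (t - j) (j - i - 1) * B (t - 1 - j)).mulVec (u (t - 1 - j)) else 0 := by
  induction d, hi using Nat.le_induction with
  | base =>
    rw [Finset.sum_eq_zero]
    · have e : t - 1 - i = t - (i + 1) := by omega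
      simp [stm, e]
    · intro j hj
      rw [Finset.mem_range] at hj
      rw [if_neg (by omega)]
  | succ d hi ih =>
    have h := stm_step A B x u hx (t - (d + 1)) (d - 1 - i)
    have e : t - (d + 1) + 1 = t - d := by omega
    have e2 : t - 1 - d = t - (d + 1) := by omega
    have e3 : d - 1 - i + 1 = d + 1 - 1 - i := by omega
    have e4 : d - i - 1 = d - 1 - i := by omega
    rw [e, e3] at h
    rw [Finset.sum_range_succ, e2, e4, if_pos (by omega)]
    refine (ih (by omega)).trans ?_
    rw [h]
    abel

lemma gram_inv {n : ℕ} {ι : Type*} [Fintype ι] (O : Matrix ι (Fin n) ℝ) (h : O.rank = n) :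
    (Oᵀ * O)⁻¹ * (Oᵀ * O) = 1 := by
  apply Matrix.nonsing_inv_mul
  rw [← Matrix.isUnit_iff_isUnit_det]
  have h2 : (Oᵀ * O).rank = n := by rw [Matrix.rank_transpose_mul_self, h]
  rw [← Matrix.mulVec_surjective_iff_isUnit]
  have h3 : LinearMap.range (Oᵀ * O).mulVecLin = ⊤ := by
    apply Submodule.eq_top_of_finrank_eq
    rw [Matrix.rank] at h2
    simp [h2]
  exact LinearMap.range_eq_top.mp h3

/-- **Corollary 1.** Exact ARMA fit of a linear time-varying system.
Fix `t ≥ q` and suppose `O_q(t)` has full column rank `n`. With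
`Φ := A_{t−1}⋯A_{t−q}`, `O_q(t)⁺ := (O_q(t)ᵀ O_q(t))⁻¹ O_q(t)ᵀ`,
`[α_1|…|α_q] := C_t Φ O_q(t)⁺` and
`[β_1|…|β_q] := [C_t B_{t−1} | … | C_t A_{t−1}⋯A_{t−q+1} B_{t−q}] − C_t Φ O_q(t)⁺ H_q(t)`,
every trajectory satisfies `z_t = Σ_{i=1}^q α_i z_{t−i} + Σ_{i=1}^q β_i u_{t−i}`. -/
theorem arma_exact_fit_tv {n m p : ℕ}
    (A : ℕ → Matrix (Fin n) (Fin n) ℝ) (B : ℕ → Matrix (Fin n) (Fin m) ℝ)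
    (Cm : ℕ → Matrix (Fin p) (Fin n) ℝ)
    (q t : ℕ) (hq : 1 ≤ q) (ht : q ≤ t)
    (hrank : (OqTV A Cm q t).rank = n) :
    ∀ (x : ℕ → Fin n → ℝ) (u : ℕ → Fin m → ℝ) (z : ℕ → Fin p → ℝ),
      (∀ k, x (k + 1) = (A k).mulVec (x k) + (B k).mulVec (u k)) →
      (∀ k, z k = (Cm k).mulVec (x k)) →
      z t = (Cm t * stm A (t - q) q
              * (((OqTV A Cm q t)ᵀ * OqTV A Cm q t)⁻¹ * (OqTV A Cm q t)ᵀ)).mulVec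
              (fun ir : Fin q × Fin p => z (t - 1 - (ir.1 : ℕ)) ir.2)
          + (MrowTV A B Cm q t
              - Cm t * stm A (t - q) q
                * (((OqTV A Cm q t)ᵀ * OqTV A Cm q t)⁻¹ * (OqTV A Cm q t)ᵀ)
                * HqTV A B Cm q t).mulVec
              (fun jc : Fin q × Fin m => u (t - 1 - (jc.1 : ℕ)) jc.2) := by
  intro x u z hx hz
  have hZ : (fun ir : Fin q × Fin p => z (t - 1 - (ir.1 : ℕ)) ir.2) =
      (OqTV A Cm q t).mulVec (x (t - q)) + (HqTV A B Cm q t).mulVec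
        (fun jc : Fin q × Fin m => u (t - 1 - (jc.1 : ℕ)) jc.2) := by
    funext ⟨i, r⟩
    have h := state_H A B x u hx t i q (by omega) ht
    simp only [hz, Pi.add_apply]
    rw [h, Matrix.mulVec_add, Matrix.mulVec_mulVec, Matrix.mulVec_sum, Pi.add_apply]
    congr 1
    rw [Finset.sum_apply, Finset.sum_range]
    simp only [Matrix.mulVec, dotProduct, Fintype.sum_prod_type]
    refine Finset.sum_congr rfl fun j _ => ?_
    by_cases hij : (i : ℕ) < j
    · simp only [HqTV, Matrix.of_apply, hij, if_true]
      change (Cm _ *ᵥ ((_ * _) *ᵥ _)) r = _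
      rw [Matrix.mulVec_mulVec, ← Matrix.mul_assoc]
      rfl
    · simp only [HqTV, Matrix.of_apply, hij, if_false]
      simp
  have hM : z t = (Cm t * stm A (t - q) q).mulVec (x (t - q)) + (MrowTV A B Cm q t).mulVec
        (fun jc : Fin q × Fin m => u (t - 1 - (jc.1 : ℕ)) jc.2) := by
    have h := state_M A B x u hx t q ht
    rw [hz t, h, Matrix.mulVec_add, Matrix.mulVec_mulVec, Matrix.mulVec_sum]
    congr 1
    funext r
    rw [Finset.sum_apply, Finset.sum_range]
    simp only [Matrix.mulVec_mulVec, ← Matrix.mul_assoc]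
    simp only [Matrix.mulVec, dotProduct, Fintype.sum_prod_type]
    rfl
  have hG := gram_inv _ hrank
  rw [hZ, hM, Matrix.mulVec_add, Matrix.sub_mulVec, Matrix.mulVec_mulVec, Matrix.mulVec_mulVec,
    Matrix.mul_assoc _ _ (OqTV A Cm q t), Matrix.mul_assoc _ _ (OqTV A Cm q t), hG,
    Matrix.mul_one]
  abel
end

section
/- (Output determined by the last q outputs and inputs.) Suppose O_q has full column rank n. Let x, x' : ℕ → ℝ^n and u, u' : ℕ → ℝ^m be two trajectories of the same system, i.e., x_{k+1} = A x_k + B u_k and x'_{k+1} = A x'_k + B u'_k for all k. If for some t ≥ q we have C x_{t−i} = C x'_{t−i} and u_{t−i} = u'_{t−i} for all i = 1, …, q, then C x_t = C x'_t. -/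
open Matrix

/-- If `O_q` has full column rank `n`, and two trajectories of the
same system agree in their outputs `C x_{t−i} = C x'_{t−i}` and inputs
`u_{t−i} = u'_{t−i}` for `i = 1, …, q` (with `t ≥ q`), then their outputs agree at
time `t`: `C x_t = C x'_t`. -/
theorem output_determined_by_past {n m p : ℕ}
    (A : Matrix (Fin n) (Fin n) ℝ) (B : Matrix (Fin n) (Fin m) ℝ)
    (C : Matrix (Fin p) (Fin n) ℝ)
    (q : ℕ) (hq : 1 ≤ q) (hrank : (Oq A C q).rank = n)
    (x x' : ℕ → Fin n → ℝ) (u u' : ℕ → Fin m → ℝ)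
    (hx : ∀ k, x (k + 1) = A.mulVec (x k) + B.mulVec (u k))
    (hx' : ∀ k, x' (k + 1) = A.mulVec (x' k) + B.mulVec (u' k))
    (t : ℕ) (ht : q ≤ t)
    (hz : ∀ i, 1 ≤ i → i ≤ q → C.mulVec (x (t - i)) = C.mulVec (x' (t - i)))
    (hu : ∀ i, 1 ≤ i → i ≤ q → u (t - i) = u' (t - i)) :
    C.mulVec (x t) = C.mulVec (x' t) := by
  have hd : ∀ j, j ≤ q → x (t - q + j) - x' (t - q + j)
      = (A ^ j).mulVec (x (t - q) - x' (t - q)) := by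
    intro j
    induction j with
    | zero => intro _; simp
    | succ j ih =>
      intro hj
      have h1 := ih (by omega)
      have h2 := hu (q - j) (by omega) (by omega)
      have h3 : t - (q - j) = t - q + j := by omega
      rw [h3] at h2
      rw [← add_assoc, hx, hx', h2, add_sub_add_right_eq_sub, ← Matrix.mulVec_sub, h1,
        Matrix.mulVec_mulVec, pow_succ']
  have hker : LinearMap.ker (Oq A C q).mulVecLin = ⊥ := by
    have h := LinearMap.finrank_range_add_finrank_ker (Oq A C q).mulVecLin
    rw [Matrix.rank] at hrank
    rw [hrank, Module.finrank_fin_fun] at h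
    exact Submodule.finrank_eq_zero.mp (by omega)
  have h0 : x (t - q) - x' (t - q) = 0 := by
    have hm : x (t - q) - x' (t - q) ∈ LinearMap.ker (Oq A C q).mulVecLin := by
      rw [LinearMap.mem_ker, Matrix.mulVecLin_apply]
      ext ⟨i, r⟩
      have hi := i.2
      have h1 := hd (q - 1 - i) (by omega)
      have h2 := hz (i + 1) (by omega) (by omega)
      have h3 : t - ((i : ℕ) + 1) = t - q + (q - 1 - i) := by omega
      rw [h3, ← sub_eq_zero, ← Matrix.mulVec_sub, h1, Matrix.mulVec_mulVec] at h2
      exact congrFun h2 r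
    rw [hker] at hm
    simpa using hm
  have h1 := hd q le_rfl
  rw [h0, Matrix.mulVec_zero, Nat.sub_add_cancel ht, sub_eq_zero] at h1
  rw [h1]
end
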